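/- If V is a positive random variable with continuous density such that for every t > 0 there is a(t) > 0 with the exponential tilt V_t (density ∝ e^{-tv} f_V(v)) equal in distribution to a(t)·V, then V has a Gamma distribution. -/

import Mathlib

open Real MeasureTheory

lemma map_scale_density (f : ℝ → ℝ) (hm : Measurable f) (c : ℝ) (hc : 0 < c) :
    Measure.map (fun v => c * v) (volume.withDensity (fun v => ENNReal.ofReal (f v))) =
      volume.withDensity (fun v => ENNReal.ofReal (c⁻¹ * f (c⁻¹ * v))) := by
  ext s hs
  have hmm : Measurable (fun v : ℝ => c * v) := measurable_const_mul c
  rw [Measure.map_apply hmm hs, withDensity_apply _ (hmm hs), withDensity_apply _ hs]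
  have hmeas : Measurable (fun v => ENNReal.ofReal (c⁻¹ * f (c⁻¹ * v))) := by fun_prop
  conv_rhs => rw [← Real.smul_map_volume_mul_left hc.ne']
  rw [Measure.restrict_smul, lintegral_smul_measure, setLIntegral_map hs hmeas hmm, smul_eq_mul,
    ← lintegral_const_mul _ (by fun_prop)]
  congr 1
  ext x
  rw [← ENNReal.ofReal_mul (abs_nonneg c), abs_of_pos hc]
  congr 1
  field_simp

lemma power_of_mul (h K : ℝ → ℝ) (hc : ContinuousOn h (Set.Ioi 0))
    (hpos : ∀ v, 0 < v → 0 < h v)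
    (hK : ∀ l v, 1 < l → 0 < v → h (l * v) = K l * h v) :
    ∃ q : ℝ, ∀ v, 0 < v → h v = h 1 * v ^ q := by
  set L : ℝ → ℝ := fun x => log (h (exp x)) - log (h 1) with hL
  have hKpos : ∀ l, 1 < l → 0 < K l := by
    intro l hl
    have h1 := hK l 1 hl one_pos
    have h2 := hpos (l * 1) (by linarith)
    rw [h1] at h2
    exact pos_of_mul_pos_left h2 (hpos 1 one_pos).le
  have key : ∀ x y, 0 < y → L (x + y) = log (K (exp y)) + L x := by
    intro x y hy
    have h1 : 1 < exp y := by simpa using hy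
    simp only [hL]
    rw [exp_add, mul_comm (exp x), hK _ _ h1 (exp_pos x),
      log_mul (hKpos _ h1).ne' (hpos _ (exp_pos x)).ne']
    ring
  have L0 : L 0 = 0 := by simp [hL]
  have addp : ∀ x y, 0 < y → L (x + y) = L x + L y := by
    intro x y hy
    have h1 := key x y hy
    have h2 := key 0 y hy
    rw [zero_add, L0] at h2
    linarith
  have add : ∀ x y, L (x + y) = L x + L y := by
    intro x y
    rcases lt_trichotomy y 0 with hy | hy | hy
    · have h1 := addp (x + y) (-y) (by linarith)
      have h2 := addp y (-y) (by linarith)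
      rw [add_neg_cancel_right] at h1
      rw [add_neg_cancel, L0] at h2
      linarith
    · subst hy; simp [L0]
    · exact addp x y hy
  have Lc : Continuous L := by
    have h1 : Continuous fun x => h (exp x) :=
      hc.comp_continuous continuous_exp (fun x => exp_pos x)
    exact (h1.log fun x => (hpos _ (exp_pos x)).ne').sub continuous_const
  let A : ℝ →+ ℝ := ⟨⟨L, L0⟩, add⟩
  have lin : ∀ x, L x = x * L 1 := by
    intro x
    have := map_real_smul A Lc x 1
    simpa [A] using this
  refine ⟨L 1, fun v hv => ?_⟩
  have h1 := lin (log v)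
  have h2 : log (h v) = log (h 1) + log v * L 1 := by
    rw [← h1]; simp only [hL]; rw [exp_log hv]; ring
  rw [← exp_log (hpos v hv), h2, exp_add, exp_log (hpos 1 one_pos), rpow_def_of_pos hv]

lemma tilt_core (f g K : ℝ → ℝ) (hc : ContinuousOn f (Set.Ioi 0))
    (hn : ∀ v, 0 ≤ f v) (hex : ∃ v, 0 < v ∧ 0 < f v)
    (hg : ∀ t, 0 < t → 0 < g t) (hKp : ∀ t, 0 < t → 0 < K t)
    (heq : ∀ t v, 0 < t → 0 < v → f (g t * v) = K t * exp (-t * v) * f v) :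
    ∃ C q b : ℝ, 0 < C ∧ 0 < b ∧ ∀ v, 0 < v → f v = C * (v ^ q * exp (-(b * v))) := by
  obtain ⟨v0, hv0, hfv0⟩ := hex
  have swap : ∀ s u, 0 < s → 0 < u → s + u * g s = u + s * g u := by
    intro s u hs hu
    have h1 := heq u (g s * v0) hu (mul_pos (hg s hs) hv0)
    have h2 := heq s (g u * v0) hs (mul_pos (hg u hu) hv0)
    rw [heq s v0 hs hv0] at h1
    rw [heq u v0 hu hv0] at h2
    rw [show g u * (g s * v0) = g s * (g u * v0) by ring, h2] at h1
    have hne : K s * K u * f v0 ≠ 0 :=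
      (mul_pos (mul_pos (hKp s hs) (hKp u hu)) hfv0).ne'
    have h3 : exp (-s * (g u * v0)+ -u * v0) = exp (-u * (g s * v0) + -s * v0) := by
      apply mul_left_cancel₀ hne
      rw [exp_add, exp_add]
      linear_combination h1
    have h4 := exp_injective h3
    apply mul_right_cancel₀ hv0.ne'
    linarith
  set c := g 1 - 1 with hcdef
  have gc : ∀ t, 0 < t → g t = 1 + c * t := by
    intro t ht
    have := swap 1 t one_pos ht
    linear_combination -this
  have c0 : 0 ≤ c := by
    by_contra hneg
    push Not at hneg
    have ht : 0 < -1 / c := div_pos_of_neg_of_neg (by norm_num) hneg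
    have h1 := hg _ ht
    rw [gc _ ht, mul_div_cancel₀ _ hneg.ne] at h1
    linarith
  have cne : c ≠ 0 := by
    intro h0
    have hev : ∀ᶠ v in nhdsWithin v0 (Set.Ioi v0), 0 < f v :=
      ((hc.continuousAt (Ioi_mem_nhds hv0)).eventually_const_lt hfv0).filter_mono nhdsWithin_le_nhds
    obtain ⟨v1, hv1, hlt⟩ := (hev.and self_mem_nhdsWithin).exists
    have hlt' : v0 < v1 := hlt
    have e : ∀ v, 0 < v → 0 < f v → K 1 * exp (-v) = 1 := by
      intro v hv hfv
      have h1 := heq 1 v one_pos hv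
      rw [gc 1 one_pos, h0] at h1
      norm_num at h1
      apply mul_right_cancel₀ hfv.ne'
      linarith
    have e1 := e v0 hv0 hfv0
    have e2 := e v1 (hv0.trans hlt') hv1
    have e3 := mul_left_cancel₀ (hKp 1 one_pos).ne' (e1.trans e2.symm)
    have := exp_injective e3
    linarith
  have cpos : 0 < c := lt_of_le_of_ne c0 (Ne.symm cne)
  set h : ℝ → ℝ := fun v => exp (c⁻¹ * v) * f v with hh
  have hK : ∀ l v, 1 < l → 0 < v → h (l * v) = K ((l - 1) / c) * h v := by
    intro l v hl hv
    have ht : 0 < (l - 1) / c := div_pos (by linarith) cpos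
    have h1 := heq _ v ht hv
    rw [gc _ ht, mul_div_cancel₀ _ cne, add_sub_cancel] at h1
    simp only [hh]
    rw [h1]
    have : exp (c⁻¹ * (l * v)) * exp (-((l - 1) / c) * v) = exp (c⁻¹ * v) := by
      rw [← exp_add]; congr 1; field_simp; ring
    linear_combination K ((l - 1) / c) * f v * this
  have hKpos : ∀ l, 1 < l → 0 < K ((l - 1) / c) := fun l hl =>
    hKp _ (div_pos (by linarith) cpos)
  have hnn : ∀ v, 0 ≤ h v := fun v => mul_nonneg (exp_pos _).le (hn v)
  have h0pos : 0 < h v0 := mul_pos (exp_pos _) hfv0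
  have hpos : ∀ v, 0 < v → 0 < h v := by
    intro v hv
    rcases lt_trichotomy v v0 with hlt | he | hlt
    · have h1 : 1 < v0 / v := by rwa [one_lt_div hv]
      have h2 := hK _ v h1 hv
      rw [div_mul_cancel₀ _ hv.ne'] at h2
      rw [h2] at h0pos
      exact pos_of_mul_pos_right h0pos (hKpos _ h1).le
    · rw [he]; exact h0pos
    · have h1 : 1 < v / v0 := by rwa [one_lt_div hv0]
      have h2 := hK _ v0 h1 hv0
      rw [div_mul_cancel₀ _ hv0.ne'] at h2
      rw [h2]
      exact mul_pos (hKpos _ h1) h0pos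
  have hcont : ContinuousOn h (Set.Ioi 0) := by
    apply ContinuousOn.mul _ hc
    fun_prop
  obtain ⟨q, hq⟩ := power_of_mul h (fun l => K ((l - 1) / c)) hcont hpos hK
  refine ⟨h 1, q, c⁻¹, hpos 1 one_pos, inv_pos.2 cpos, fun v hv => ?_⟩
  have h1 := hq v hv
  have h2 : exp (c⁻¹ * v) * exp (-(c⁻¹ * v)) = 1 := by rw [← exp_add]; simp
  have h3 : exp (c⁻¹ * v) * f v = h 1 * v ^ q := h1
  linear_combination exp (-(c⁻¹ * v)) * h3 - f v * h2

/-- Marshall–Olkin 18.B.6: if a positive random variable `V` with continuous density `f`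
is such that every exponential tilt of `V` is equal in distribution to a scale multiple
of `V`, then `V` has a Gamma distribution. -/
theorem tilt_scale_closed_implies_gamma
    (f : ℝ → ℝ) (hf_cont : ContinuousOn f (Set.Ioi 0))
    (hf_nonneg : ∀ v, 0 ≤ f v) (hf_zero : ∀ v ≤ (0:ℝ), f v = 0)
    (hf_prob : IsProbabilityMeasure (volume.withDensity (fun v => ENNReal.ofReal (f v))))
    (a : ℝ → ℝ) (ha : ∀ t, 0 < t → 0 < a t)
    (htilt : ∀ t, 0 < t →
      (volume.withDensity (fun v => ENNReal.ofReal
          (Real.exp (-t * v) * f v / ∫ v', Real.exp (-t * v') * f v'))) =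
        Measure.map (fun v => a t * v)
          (volume.withDensity (fun v => ENNReal.ofReal (f v)))) :
    ∃ p b : ℝ, 0 < p ∧ 0 < b ∧ ∀ v : ℝ, 0 < v →
      f v = b ^ p / Real.Gamma p * v ^ (p - 1) * Real.exp (-(b * v)) := by
  have hm : Measurable f := by
    have : f = (Set.Ioi (0:ℝ)).indicator f := by
      ext v
      by_cases hv : 0 < v
      · rw [Set.indicator_of_mem (show v ∈ Set.Ioi (0:ℝ) from hv)]
      · rw [Set.indicator_of_notMem (show v ∉ Set.Ioi (0:ℝ) from hv), hf_zero v (not_lt.1 hv)]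
    rw [this]
    classical
    rw [← Set.piecewise_eq_indicator]
    exact ContinuousOn.measurable_piecewise hf_cont continuousOn_const measurableSet_Ioi
  have hL1 : ∫⁻ v, ENNReal.ofReal (f v) = 1 := by
    have := hf_prob.measure_univ
    rwa [withDensity_apply _ MeasurableSet.univ, setLIntegral_univ] at this
  have hint : Integrable f := by
    refine ⟨hm.aestronglyMeasurable, ?_⟩
    rw [hasFiniteIntegral_iff_ofReal (Filter.Eventually.of_forall hf_nonneg), hL1]
    exact ENNReal.one_lt_top
  have hint1 : ∫ v, f v = 1 := by
    rw [integral_eq_lintegral_of_nonneg_ae (Filter.Eventually.of_forall hf_nonneg)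
      hm.aestronglyMeasurable, hL1]
    simp
  have hex : ∃ v, 0 < v ∧ 0 < f v := by
    by_contra hne
    push Not at hne
    have : f = 0 := by
      ext v
      rcases le_or_gt v 0 with hv | hv
      · exact hf_zero v hv
      · exact le_antisymm (hne v hv) (hf_nonneg v)
    rw [this] at hint1
    simp at hint1
  set φ : ℝ → ℝ := fun t => ∫ v', Real.exp (-t * v') * f v' with hφ
  have hφpos : ∀ t, 0 < t → 0 < φ t := by
    intro t ht
    have h0 : 0 ≤ φ t := integral_nonneg fun v => mul_nonneg (exp_pos _).le (hf_nonneg v)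
    refine lt_of_le_of_ne h0 fun he => ?_
    have h1 := htilt t ht
    have h2 : (∫ v', Real.exp (-t * v') * f v') = 0 := he.symm
    rw [h2] at h1
    have h3 := congrArg (fun μ => μ Set.univ) h1
    rw [Measure.map_apply (measurable_const_mul _) MeasurableSet.univ] at h3
    simp [hL1] at h3
  have hpt : ∀ t v, 0 < t → 0 < v →
      Real.exp (-t * v) * f v / φ t = (a t)⁻¹ * f ((a t)⁻¹ * v) := by
    intro t v ht hv
    have h1 := htilt t ht
    rw [map_scale_density f hm _ (ha t ht),
      withDensity_eq_iff_of_sigmaFinite (by fun_prop) (by fun_prop)] at h1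
    have hai : 0 < (a t)⁻¹ := inv_pos.2 (ha t ht)
    have h2 : (fun v => Real.exp (-t * v) * f v / φ t) =ᵐ[volume.restrict (Set.Ioi 0)]
        (fun v => (a t)⁻¹ * f ((a t)⁻¹ * v)) := by
      apply ae_restrict_of_ae
      filter_upwards [h1] with x hx
      exact (ENNReal.ofReal_eq_ofReal_iff
        (div_nonneg (mul_nonneg (exp_pos _).le (hf_nonneg _)) (hφpos t ht).le)
        (mul_nonneg hai.le (hf_nonneg _))).1 hx
    refine Measure.eqOn_open_of_ae_eq h2 isOpen_Ioi ?_ ?_ hv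
    · refine ContinuousOn.div_const (ContinuousOn.mul ?_ hf_cont) _
      fun_prop
    · refine continuousOn_const.mul (hf_cont.comp (by fun_prop) ?_)
      intro x hx
      exact mul_pos hai hx
  obtain ⟨C, q, b, hC, hb, hform⟩ := tilt_core f (fun t => (a t)⁻¹) (fun t => a t / φ t)
    hf_cont hf_nonneg hex (fun t ht => inv_pos.2 (ha t ht))
    (fun t ht => div_pos (ha t ht) (hφpos t ht)) (by
      intro t v ht hv
      have h1 := hpt t v ht hv
      have h2 := (ha t ht).ne'
      have h3 := (hφpos t ht).ne'
      have h4 : f ((a t)⁻¹ * v) = a t * ((a t)⁻¹ * f ((a t)⁻¹ * v)) := by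
        rw [← mul_assoc, mul_inv_cancel₀ h2, one_mul]
      change f ((a t)⁻¹ * v) = _
      rw [h4, ← h1]
      ring)
  have hq : -1 < q := by
    rw [← intervalIntegral.integrableOn_Ioo_rpow_iff (one_pos)]
    have h1 : IntegrableOn (fun v => C⁻¹ * exp b * f v) (Set.Ioo 0 1) :=
      (hint.const_mul _).integrableOn
    refine Integrable.mono' h1 (by fun_prop) ?_
    refine ae_restrict_of_forall_mem measurableSet_Ioo fun v hv => ?_
    have hr : 0 ≤ v ^ q := rpow_nonneg hv.1.le q
    rw [norm_of_nonneg hr, hform v hv.1]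
    have h2 : C⁻¹ * exp b * (C * (v ^ q * exp (-(b * v)))) = v ^ q * exp (b + -(b * v)) := by
      rw [exp_add]; field_simp
    rw [h2]
    apply le_mul_of_one_le_right hr
    apply one_le_exp
    nlinarith [hv.2]
  have hp : 0 < q + 1 := by linarith
  have hI := Real.integral_rpow_mul_exp_neg_mul_Ioi hp hb
  rw [add_sub_cancel_right] at hI
  have hI2 : ∫ v in Set.Ioi 0, f v = 1 := by
    rw [setIntegral_eq_integral_of_forall_compl_eq_zero, hint1]
    intro x hx
    exact hf_zero x (not_lt.1 hx)
  rw [setIntegral_congr_fun measurableSet_Ioi (fun v hv => hform v hv), integral_const_mul, hI] at hI2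
  have hbp : 0 < b ^ (q + 1) := rpow_pos_of_pos hb _
  have hG : 0 < Real.Gamma (q + 1) := Real.Gamma_pos_of_pos hp
  have hCe : C = b ^ (q + 1) / Real.Gamma (q + 1) := by
    rw [one_div, inv_rpow hb.le] at hI2
    field_simp at hI2 ⊢
    linarith
  refine ⟨q + 1, b, hp, hb, fun v hv => ?_⟩
  rw [hform v hv, add_sub_cancel_right, hCe]
  ring
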